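/- For all points P and Q in the plane, dist(A₁',F₁₂) + dist(A₂',F₁₂) + dist(A₃,F₃₄) + dist(A₄,F₃₄) + 2·sin(θ/2)·dist(F₁₂,F₃₄) ≤ dist(A₁',P) + dist(A₂',P) + dist(A₃,Q) + dist(A₄,Q) + 2·sin(θ/2)·dist(P,Q); that is, the pair (F₁₂,F₃₄) with equal weights w(θ) = 2·sin(θ/2) solves the weighted two-node minimum network problem for the isosceles trapezium. -/

import Mathlib

open Real EuclideanGeometry

noncomputable def pt (x y : ℝ) : EuclideanSpace ℝ (Fin 2) :=
  (WithLp.equiv 2 (Fin 2 → ℝ)).symm ![x, y]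

/-!
Pull each segment of a network with a force equal to its weight, directed along the segment. If the
forces cancel at both free nodes, then the total work done by them does not depend on where these
nodes are: it is the weighted length in the equilibrium position and, by Cauchy-Schwarz, a lower
bound for the weighted length in any other. For the trapezium, four unit forces inclined at `θ / 2`
to the bases balance a vertical force `2 * sin (θ / 2)`.
-/

section NormedSpace

variable {E ι κ : Type*} [SeminormedAddCommGroup E] [NormedSpace ℝ E]

lemma apply_sub_le_norm_mul_dist (f : StrongDual ℝ E) (A P : E) :
    f (A - P) ≤ ‖f‖ * dist A P := by
  rw [dist_eq_norm]
  exact (le_abs_self _).trans (f.le_opNorm _)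

variable [Fintype ι] [Fintype κ]

lemma sum_apply_sub_add_sum_apply_sub_add_apply_sub
    {f : ι → StrongDual ℝ E} {g : κ → StrongDual ℝ E} {h : StrongDual ℝ E}
    (hf : ∑ i, f i = h) (hg : ∑ j, g j = -h) (A : ι → E) (B : κ → E) (P Q : E) :
    ∑ i, f i (A i - P) + ∑ j, g j (B j - Q) + h (P - Q) = ∑ i, f i (A i) + ∑ j, g j (B j) := by
  have hfP : ∑ i, f i P = h P := by simp [← hf]
  have hgQ : ∑ j, g j Q = -h Q := by simpa using congr($hg Q)
  simp only [map_sub, Finset.sum_sub_distrib, hfP, hgQ]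
  ring

theorem two_node_network_le_of_calibration
    {f : ι → StrongDual ℝ E} {g : κ → StrongDual ℝ E} {h : StrongDual ℝ E}
    (hf : ∑ i, f i = h) (hg : ∑ j, g j = -h) {A : ι → E} {B : κ → E} {F G : E}
    (hA : ∀ i, f i (A i - F) = ‖f i‖ * dist (A i) F)
    (hB : ∀ j, g j (B j - G) = ‖g j‖ * dist (B j) G)
    (hFG : h (F - G) = ‖h‖ * dist F G) (P Q : E) :
    ∑ i, ‖f i‖ * dist (A i) F + ∑ j, ‖g j‖ * dist (B j) G + ‖h‖ * dist F G ≤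
      ∑ i, ‖f i‖ * dist (A i) P + ∑ j, ‖g j‖ * dist (B j) Q + ‖h‖ * dist P Q :=
  calc
    _ = ∑ i, f i (A i - F) + ∑ j, g j (B j - G) + h (F - G) := by simp only [hA, hB, hFG]
    _ = ∑ i, f i (A i - P) + ∑ j, g j (B j - Q) + h (P - Q) := by
      simp only [sum_apply_sub_add_sum_apply_sub_add_apply_sub hf hg]
    _ ≤ _ := by gcongr <;> exact apply_sub_le_norm_mul_dist ..

end NormedSpace

section InnerProductSpace

open scoped RealInnerProductSpace

variable {E : Type*} [NormedAddCommGroup E] [InnerProductSpace ℝ E]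

lemma inner_sub_eq_norm_mul_dist_of_sameRay {u A F : E} (h : SameRay ℝ u (A - F)) :
    ⟪u, A - F⟫ = ‖u‖ * dist A F := by
  rw [dist_eq_norm, inner_eq_norm_mul_iff_real]
  exact h.norm_smul_eq.symm

theorem two_node_network_le_of_equilibrium {ι κ : Type*} [Fintype ι] [Fintype κ]
    {u : ι → E} {v : κ → E} {w : E} (hu : ∑ i, u i = w) (hv : ∑ j, v j = -w)
    {A : ι → E} {B : κ → E} {F G : E}
    (hA : ∀ i, SameRay ℝ (u i) (A i - F)) (hB : ∀ j, SameRay ℝ (v j) (B j - G))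
    (hFG : SameRay ℝ w (F - G)) (P Q : E) :
    ∑ i, ‖u i‖ * dist (A i) F + ∑ j, ‖v j‖ * dist (B j) G + ‖w‖ * dist F G ≤
      ∑ i, ‖u i‖ * dist (A i) P + ∑ j, ‖v j‖ * dist (B j) Q + ‖w‖ * dist P Q := by
  simpa only [innerSL_apply_norm] using
    two_node_network_le_of_calibration (f := fun i ↦ innerSL ℝ (u i))
      (g := fun j ↦ innerSL ℝ (v j)) (h := innerSL ℝ w)
      (by rw [← map_sum, hu]) (by rw [← map_sum, hv, map_neg])
      (by simpa using fun i ↦ inner_sub_eq_norm_mul_dist_of_sameRay (hA i))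
      (by simpa using fun j ↦ inner_sub_eq_norm_mul_dist_of_sameRay (hB j))
      (by simpa using inner_sub_eq_norm_mul_dist_of_sameRay hFG) P Q

lemma four_terminal_network_le_of_equilibrium {u₁ u₂ v₁ v₂ w A₁ A₂ B₁ B₂ F G : E}
    (hu : u₁ + u₂ = w) (hv : v₁ + v₂ = -w)
    (hA₁ : SameRay ℝ u₁ (A₁ - F)) (hA₂ : SameRay ℝ u₂ (A₂ - F))
    (hB₁ : SameRay ℝ v₁ (B₁ - G)) (hB₂ : SameRay ℝ v₂ (B₂ - G))
    (hFG : SameRay ℝ w (F - G)) (P Q : E) :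
    ‖u₁‖ * dist A₁ F + ‖u₂‖ * dist A₂ F + ‖v₁‖ * dist B₁ G + ‖v₂‖ * dist B₂ G + ‖w‖ * dist F G ≤
      ‖u₁‖ * dist A₁ P + ‖u₂‖ * dist A₂ P + ‖v₁‖ * dist B₁ Q + ‖v₂‖ * dist B₂ Q +
        ‖w‖ * dist P Q := by
  simpa [Fin.sum_univ_two, ← add_assoc] using
    two_node_network_le_of_equilibrium (u := ![u₁, u₂]) (v := ![v₁, v₂])
      (A := ![A₁, A₂]) (B := ![B₁, B₂]) (by simpa using hu) (by simpa using hv)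
      (Fin.forall_fin_two.2 ⟨hA₁, hA₂⟩) (Fin.forall_fin_two.2 ⟨hB₁, hB₂⟩) hFG P Q

lemma norm_cos_smul_add_sin_smul {x y : E} (hx : ‖x‖ = 1) (hy : ‖y‖ = 1) (hxy : ⟪x, y⟫ = 0)
    (φ : ℝ) : ‖cos φ • x + sin φ • y‖ = 1 := by
  have orthogonal : ⟪cos φ • x, sin φ • y⟫ = 0 := by
    rw [real_inner_smul_left, real_inner_smul_right, hxy, mul_zero, mul_zero]
  rw [← sq_eq_sq₀ (norm_nonneg _) zero_le_one, sq,
    norm_add_sq_eq_norm_sq_add_norm_sq_real orthogonal]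
  simp [norm_smul, hx, hy, ← sq]

end InnerProductSpace

lemma sameRay_cos_smul_add_sin_smul {E : Type*} [AddCommGroup E] [Module ℝ E] {c φ : ℝ}
    (hc : 0 ≤ c) (hφ : 0 < cos φ) (x y : E) :
    SameRay ℝ (cos φ • x + sin φ • y) (c • x + (c * tan φ) • y) := by
  have h : c • x + (c * tan φ) • y = (c / cos φ) • (cos φ • x + sin φ • y) := by
    rw [tan_eq_sin_div_cos]
    match_scalars <;> field_simp
  rw [h]
  exact SameRay.sameRay_nonneg_smul_right _ (by positivity)

open scoped RealInnerProductSpace in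
theorem stmt_0_general {E : Type*} [NormedAddCommGroup E] [InnerProductSpace ℝ E] {x y : E}
    (hx : ‖x‖ = 1) (hy : ‖y‖ = 1) (hxy : ⟪x, y⟫ = 0) {a b d φ : ℝ} (ha : 0 ≤ a) (hb : 0 ≤ b)
    (hφ₀ : 0 ≤ φ) (hφ : φ < π / 2) (hd : (a + b) / 2 * tan φ ≤ d) (P Q : E) :
    dist (-(a / 2) • x + d • y) ((d - a / 2 * tan φ) • y) +
        dist ((a / 2) • x + d • y) ((d - a / 2 * tan φ) • y) +
        dist ((b / 2) • x) ((b / 2 * tan φ) • y) + dist (-(b / 2) • x) ((b / 2 * tan φ) • y) +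
        2 * sin φ * dist ((d - a / 2 * tan φ) • y) ((b / 2 * tan φ) • y) ≤
      dist (-(a / 2) • x + d • y) P + dist ((a / 2) • x + d • y) P +
        dist ((b / 2) • x) Q + dist (-(b / 2) • x) Q + 2 * sin φ * dist P Q := by
  have hcos : 0 < cos φ := cos_pos_of_mem_Ioo ⟨by linarith [pi_pos], hφ⟩
  have hsin : 0 ≤ sin φ := sin_nonneg_of_nonneg_of_le_pi hφ₀ (by linarith [pi_pos])
  have ha' : 0 ≤ a / 2 := by positivity
  have hb' : 0 ≤ b / 2 := by positivity
  have norm_w : ‖(2 * sin φ) • y‖ = 2 * sin φ := by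
    rw [norm_smul_of_nonneg (by positivity), hy, mul_one]
  have sameRay_w : SameRay ℝ ((2 * sin φ) • y)
      ((d - a / 2 * tan φ) • y - (b / 2 * tan φ) • y) := by
    rw [← sub_smul]
    exact (SameRay.rfl.nonneg_smul_left (by positivity)).nonneg_smul_right (by linarith)
  have trapezium_network_le := four_terminal_network_le_of_equilibrium
    (u₁ := cos φ • -x + sin φ • y) (u₂ := cos φ • x + sin φ • y)
    (v₁ := cos φ • x + sin φ • -y) (v₂ := cos φ • -x + sin φ • -y)
    (A₁ := -(a / 2) • x + d • y) (A₂ := (a / 2) • x + d • y)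
    (B₁ := (b / 2) • x) (B₂ := -(b / 2) • x) (by module) (by module)
    (by convert sameRay_cos_smul_add_sin_smul ha' hcos (-x) y using 1; module)
    (by convert sameRay_cos_smul_add_sin_smul ha' hcos x y using 1; module)
    (by convert sameRay_cos_smul_add_sin_smul hb' hcos x (-y) using 1; module)
    (by convert sameRay_cos_smul_add_sin_smul hb' hcos (-x) (-y) using 1; module) sameRay_w P Q
  simpa only [norm_cos_smul_add_sin_smul, norm_w, norm_neg, inner_neg_left, inner_neg_right, hx, hy,
    hxy, neg_zero, one_mul] using trapezium_network_le

lemma pt_eq_smul_single_add_smul_single (x y : ℝ) :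
    pt x y = x • EuclideanSpace.single 0 1 + y • EuclideanSpace.single 1 1 := by
  ext i
  fin_cases i <;> simp [pt]

lemma half_mul_tan_arctan_div_two_mul_le {s d : ℝ} (hs : 0 ≤ s) (hd : s ≤ 2 * d) :
    s / 2 * tan (arctan (s / (2 * d))) ≤ d := by
  rw [tan_arctan]
  calc s / 2 * (s / (2 * d)) ≤ s / 2 * 1 := by gcongr; exact div_le_one_of_le₀ hd (hs.trans hd)
    _ ≤ d := by linarith

theorem stmt_0 (a12 a34 d θ : ℝ) (ha12 : 0 < a12) (ha34 : 0 < a34)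
    (hd : max a12 a34 < d)
    (hθ : θ = 2 * Real.arctan ((a12 + a34) / (2 * d)))
    (A₁' A₂' A₃ A₄ F₁₂ F₃₄ : EuclideanSpace ℝ (Fin 2))
    (hA₁ : A₁' = pt (-(a12 / 2)) d) (hA₂ : A₂' = pt (a12 / 2) d)
    (hA₃ : A₃ = pt (a34 / 2) 0) (hA₄ : A₄ = pt (-(a34 / 2)) 0)
    (hF₁₂ : F₁₂ = pt 0 (d - a12 / 2 * Real.tan (θ / 2)))
    (hF₃₄ : F₃₄ = pt 0 (a34 / 2 * Real.tan (θ / 2))) :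
    ∀ P Q : EuclideanSpace ℝ (Fin 2),
      dist A₁' F₁₂ + dist A₂' F₁₂ + dist A₃ F₃₄ + dist A₄ F₃₄ +
        2 * Real.sin (θ / 2) * dist F₁₂ F₃₄ ≤
      dist A₁' P + dist A₂' P + dist A₃ Q + dist A₄ Q +
        2 * Real.sin (θ / 2) * dist P Q := by
  have hφ : θ / 2 = arctan ((a12 + a34) / (2 * d)) := by
    rw [hθ, mul_div_cancel_left₀ _ two_ne_zero]
  have hd' : a12 + a34 ≤ 2 * d := by linarith [le_max_left a12 a34, le_max_right a12 a34]
  have hs : 0 ≤ a12 + a34 := by positivity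
  simpa only [hA₁, hA₂, hA₃, hA₄, hF₁₂, hF₃₄, hφ, pt_eq_smul_single_add_smul_single, zero_smul,
    zero_add, add_zero] using
    stmt_0_general (x := EuclideanSpace.single 0 1) (y := EuclideanSpace.single 1 1)
      (by simp) (by simp) (by simp [EuclideanSpace.inner_single_left]) ha12.le ha34.le
      (arctan_nonneg.2 (div_nonneg hs (hs.trans hd'))) (arctan_lt_pi_div_two _)
      (half_mul_tan_arctan_div_two_mul_le hs hd')
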